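/- Let d be a positive integer and let ω(d) denote the number of distinct prime divisors of d. Consider the discriminant quadratic form q_S of the lattice S = ⟨2⟩ ⊕ ⟨-2d⟩, namely the map q_S : ℤ/2ℤ × ℤ/2dℤ → ℚ/2ℤ given on classes of integers (a,b) by q_S(a,b) = a²/2 - b²/(2d) mod 2ℤ. Then the group O(q_S) of additive automorphisms φ of ℤ/2ℤ × ℤ/2dℤ with q_S ∘ φ = q_S has order 2^{1+ω(d)} if d ≡ 3 (mod 4) or 8 divides d, and order 2^{ω(d)} for all other d. -/

import Mathlib

/-- The discriminant quadratic form of the lattice `S = ⟨2⟩ ⊕ ⟨-2d⟩` on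
`A_S = ℤ/2ℤ × ℤ/2dℤ`, with values in `ℚ/2ℤ = AddCircle (2 : ℚ)`:
`q_S(a,b) = a²/2 - b²/(2d) mod 2ℤ`. -/
noncomputable def qS (d : ℕ) (x : ZMod 2 × ZMod (2 * d)) : AddCircle (2 : ℚ) :=
  (((x.1.val : ℚ) ^ 2 / 2 - (x.2.val : ℚ) ^ 2 / (2 * d) : ℚ) : AddCircle (2 : ℚ))

lemma qS_int (d : ℕ) (hd : 0 < d) (a b a' b' : ℤ) :
    qS d ((a : ZMod 2), (b : ZMod (2*d))) = qS d ((a' : ZMod 2), (b' : ZMod (2*d))) ↔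
      (4 * d : ℤ) ∣ (d * a ^ 2 - b ^ 2) - (d * a' ^ 2 - b' ^ 2) := by
  have hq : (d : ℚ) ≠ 0 := by positivity
  have key : ∀ a b : ℤ, qS d ((a : ZMod 2), (b : ZMod (2*d))) =
      (((a : ℚ) ^ 2 / 2 - (b : ℚ) ^ 2 / (2 * d) : ℚ) : AddCircle (2 : ℚ)) := by
    intro a b
    have : NeZero (2 * d) := ⟨by omega⟩
    unfold qS
    have h1 : (((a : ZMod 2).val : ℤ)) = a % 2 := by
      rw [ZMod.val_intCast]; rfl
    have h2 : (((b : ZMod (2*d)).val : ℤ)) = b % (2 * d) := by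
      rw [ZMod.val_intCast]; push_cast; rfl
    obtain ⟨u, hu⟩ : ∃ u : ℤ, (((a : ZMod 2).val : ℤ)) = a + 2 * u :=
      ⟨-(a / 2), by rw [h1]; have := Int.emod_add_mul_ediv a 2; linarith⟩
    obtain ⟨v, hv⟩ : ∃ v : ℤ, (((b : ZMod (2*d)).val : ℤ)) = b + 2 * d * v :=
      ⟨-(b / (2 * d)), by rw [h2]; have := Int.emod_add_mul_ediv b (2*d); linarith⟩
    have hu' : (((a : ZMod 2).val : ℚ)) = a + 2 * u := by exact_mod_cast hu
    have hv' : (((b : ZMod (2*d)).val : ℚ)) = b + 2 * d * v := by exact_mod_cast hv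
    simp only [hu', hv']
    rw [← sub_eq_zero, ← AddCircle.coe_sub, AddCircle.coe_eq_zero_iff]
    refine ⟨a * u + u ^ 2 - b * v - d * v ^ 2, ?_⟩
    simp only [zsmul_eq_mul]
    push_cast
    field_simp
    ring
  rw [key, key, ← sub_eq_zero, ← AddCircle.coe_sub, AddCircle.coe_eq_zero_iff]
  constructor
  · rintro ⟨n, hn⟩
    refine ⟨n, ?_⟩
    simp only [zsmul_eq_mul] at hn
    field_simp at hn
    have : ((((d * a ^ 2 - b ^ 2) - (d * a' ^ 2 - b' ^ 2) : ℤ)) : ℚ) = ((4 * d * n : ℤ) : ℚ) := by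
      push_cast; linarith
    exact_mod_cast this
  · rintro ⟨n, hn⟩
    refine ⟨n, ?_⟩
    have : ((((d * a ^ 2 - b ^ 2) - (d * a' ^ 2 - b' ^ 2) : ℤ)) : ℚ) = ((4 * d * n : ℤ) : ℚ) := by
      rw [hn]
    push_cast at this
    simp only [zsmul_eq_mul]
    field_simp
    linarith

lemma exists_int (d : ℕ) (x : ZMod 2 × ZMod (2*d)) :
    ∃ a b : ℤ, x = ((a : ZMod 2), (b : ZMod (2*d))) := by
  obtain ⟨a, ha⟩ := ZMod.intCast_surjective x.1
  obtain ⟨b, hb⟩ := ZMod.intCast_surjective x.2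
  exact ⟨a, b, by rw [ha, hb]⟩

/-- candidate isometry -/
noncomputable def fS (d : ℕ) (s t : ℤ) : (ZMod 2 × ZMod (2*d)) →+ (ZMod 2 × ZMod (2*d)) :=
  (AddMonoidHom.coprod
    (ZMod.lift 2 ⟨(zmultiplesHom _ (((1 + d * s : ℤ) : ZMod 2), ((d * s : ℤ) : ZMod (2*d)))), by
      simp only [zmultiplesHom_apply, zsmul_eq_mul, Prod.ext_iff, Prod.fst_mul, Prod.snd_mul,
        Prod.fst_zero, Prod.snd_zero, Prod.fst_intCast, Prod.snd_intCast]
      constructor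
      · rw [← Int.cast_mul, ZMod.intCast_zmod_eq_zero_iff_dvd]
        exact Dvd.intro _ rfl
      · rw [← Int.cast_mul, ZMod.intCast_zmod_eq_zero_iff_dvd]
        exact ⟨s, by push_cast; ring⟩⟩)
    (ZMod.lift (2*d) ⟨(zmultiplesHom _ ((s : ZMod 2), (t : ZMod (2*d)))), by
      simp only [zmultiplesHom_apply, zsmul_eq_mul, Prod.ext_iff, Prod.fst_mul, Prod.snd_mul,
        Prod.fst_zero, Prod.snd_zero, Prod.fst_intCast, Prod.snd_intCast]
      constructor
      · rw [← Int.cast_mul, ZMod.intCast_zmod_eq_zero_iff_dvd]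
        exact ⟨d * s, by push_cast; ring⟩
      · rw [← Int.cast_mul, ZMod.intCast_zmod_eq_zero_iff_dvd]
        exact Dvd.intro _ rfl⟩))

lemma fS_apply (d : ℕ) (s t a b : ℤ) : fS d s t ((a : ZMod 2), (b : ZMod (2*d))) =
    (((a * (1 + d * s) + b * s : ℤ) : ZMod 2), ((a * (d * s) + b * t : ℤ) : ZMod (2*d))) := by
  simp only [fS, AddMonoidHom.coprod_apply, ZMod.lift_coe]
  ext <;> simp [mul_add]

lemma inj_of_isom (d : ℕ) (hd : 0 < d) (f : (ZMod 2 × ZMod (2*d)) →+ (ZMod 2 × ZMod (2*d)))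
    (hf : ∀ x, qS d (f x) = qS d x) : Function.Injective f := by
  rw [injective_iff_map_eq_zero]
  intro x hx
  have h : ∀ y, qS d (x + y) = qS d y := fun y => by
    rw [← hf, map_add, hx, zero_add, hf]
  obtain ⟨a, b, rfl⟩ := exists_int d x
  have h0 := h (((0:ℤ) : ZMod 2), ((0:ℤ) : ZMod (2*d)))
  have h1 := h (((1:ℤ) : ZMod 2), ((0:ℤ) : ZMod (2*d)))
  have h2 := h (((0:ℤ) : ZMod 2), ((1:ℤ) : ZMod (2*d)))
  simp only [Prod.mk_add_mk, ← Int.cast_add] at h0 h1 h2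
  rw [qS_int d hd] at h0 h1 h2
  have hd' : (d : ℤ) ≠ 0 := by positivity
  ext
  · simp only [Prod.fst_zero]
    rw [ZMod.intCast_zmod_eq_zero_iff_dvd]
    obtain ⟨n, hn⟩ := dvd_sub h1 h0
    refine ⟨n, ?_⟩
    have : (2 * d : ℤ) * a = (2 * d) * (2 * n) := by linarith
    have := mul_left_cancel₀ (by positivity) this
    simpa using this
  · simp only [Prod.snd_zero]
    rw [ZMod.intCast_zmod_eq_zero_iff_dvd]
    obtain ⟨n, hn⟩ := dvd_sub h2 h0
    refine ⟨-n, ?_⟩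
    push_cast
    linarith

lemma cond_of_sq (d : ℕ) (_hd : 0 < d) (t : ℤ) (h : (4 * d : ℤ) ∣ t ^ 2 - (1 + d)) :
    (d % 4 = 3 ∧ t % 2 = 0) ∨ (8 ∣ d ∧ t % 2 = 1) := by
  obtain ⟨n, hn⟩ := h
  have h8 : (t ^ 2) % 8 = 0 ∨ (t ^ 2) % 8 = 1 ∨ (t ^ 2) % 8 = 4 := by
    have : t % 8 = 0 ∨ t % 8 = 1 ∨ t % 8 = 2 ∨ t % 8 = 3 ∨ t % 8 = 4 ∨ t % 8 = 5 ∨ t % 8 = 6 ∨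
      t % 8 = 7 := by omega
    rcases this with h | h | h | h | h | h | h | h <;> simp [pow_two, Int.mul_emod, h]
  have h2 : t % 2 = (t ^ 2) % 2 := by
    rcases Int.emod_two_eq_zero_or_one t with h | h <;> simp [pow_two, Int.mul_emod, h]
  have e : t ^ 2 = 1 + d + 4 * (d * n) := by linarith
  rcases Nat.even_or_odd' d with ⟨c, hc | hc⟩
  · have e2 : t ^ 2 = 1 + d + 8 * (c * n) := by rw [e, hc]; push_cast; ring
    generalize (c : ℤ) * n = z at e2
    right; omega
  · generalize (d : ℤ) * n = z at e
    left; omega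

lemma fS_isom (d : ℕ) (hd : 0 < d) (s t : ℤ) (hs : s = 0 ∨ s = 1)
    (h : (4 * d : ℤ) ∣ t ^ 2 - (1 + d * s)) (x) : qS d (fS d s t x) = qS d x := by
  obtain ⟨a, b, rfl⟩ := exists_int d x
  rw [fS_apply, qS_int d hd]
  rcases hs with rfl | rfl
  · obtain ⟨n, hn⟩ := h
    exact ⟨-n * b ^ 2, by linear_combination (-b^2) * hn⟩
  · rw [mul_one] at h
    have hc := cond_of_sq d hd t h
    obtain ⟨n, hn⟩ := h
    obtain ⟨u, hu⟩ : ∃ u : ℤ, (d : ℤ) * (d + 1) = 4 * u := by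
      rcases hc with ⟨h, -⟩ | ⟨h, -⟩
      · obtain ⟨v, hv⟩ : ∃ v : ℤ, (d : ℤ) + 1 = 4 * v := ⟨((d : ℤ) + 1) / 4, by omega⟩
        exact ⟨d * v, by rw [hv]; ring⟩
      · obtain ⟨v, hv⟩ : ∃ v : ℤ, (d : ℤ) = 4 * v := ⟨(d : ℤ) / 4, by omega⟩
        exact ⟨v * (d + 1), by linear_combination (d + 1 : ℤ) * hv⟩
    obtain ⟨w, hw⟩ : ∃ w : ℤ, (1 + d - t : ℤ) = 2 * w := ⟨((1 + d - t : ℤ)) / 2, by omega⟩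
    exact ⟨u * a ^ 2 + a * b * w - n * b ^ 2, by
      linear_combination (-b^2) * hn + a^2 * d * hu + 2 * d * a * b * hw⟩

lemma isom_det (d : ℕ) (hd : 0 < d) (f : (ZMod 2 × ZMod (2*d)) →+ (ZMod 2 × ZMod (2*d)))
    (hf : ∀ x, qS d (f x) = qS d x) (s t : ℤ) (hs : s = 0 ∨ s = 1)
    (h : f (0, 1) = ((s : ZMod 2), (t : ZMod (2*d)))) :
    (4 * d : ℤ) ∣ t ^ 2 - (1 + d * s) ∧
    f (1, 0) = (((1 + d * s : ℤ) : ZMod 2), ((d * s : ℤ) : ZMod (2*d))) := by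
  have : NeZero (2 * d) := ⟨by omega⟩
  have hd' : (d : ℤ) ≠ 0 := by positivity
  have hs2 : s ^ 2 = s := by rcases hs with rfl | rfl <;> norm_num
  have h1 := hf (((0:ℤ) : ZMod 2), ((1:ℤ) : ZMod (2*d)))
  simp only [Int.cast_zero, Int.cast_one] at h1
  rw [h] at h1
  have h1' := (qS_int d hd s t 0 1).1 (by simpa using h1)
  have h1'' : (4 * d : ℤ) ∣ t ^ 2 - (1 + d * s) := by
    rw [← dvd_neg]
    have e : -(t ^ 2 - (1 + d * s)) = d * s ^ 2 - t ^ 2 - (d * 0 ^ 2 - 1 ^ 2) := by rw [hs2]; ring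
    rw [e]; exact h1'
  refine ⟨h1'', ?_⟩
  obtain ⟨p, r, hw⟩ : ∃ p r : ℤ, f (1, 0) = ((p : ZMod 2), (r : ZMod (2*d))) := exists_int d _
  have h2w : f (1, 0) + f (1, 0) = 0 := by
    rw [← map_add, Prod.mk_add_mk]
    have : (1 : ZMod 2) + 1 = 0 := by decide
    rw [this, add_zero]; exact map_zero f
  have hr : (2 * d : ℤ) ∣ r + r := by
    have := congrArg Prod.snd h2w
    rw [hw] at this
    simp only [Prod.mk_add_mk, Prod.snd_zero, ← Int.cast_add] at this
    rw [ZMod.intCast_zmod_eq_zero_iff_dvd] at this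
    exact_mod_cast this
  obtain ⟨e, he⟩ := hr
  have hre : r = d * e := by linarith
  have h2 := hf (1, 0)
  rw [hw] at h2
  have h2' := (qS_int d hd p r 1 0).1 (by simpa using h2)
  have h3 := hf (1, 1)
  have h11 : ((1, 1) : ZMod 2 × ZMod (2*d)) = (1, 0) + (0, 1) := by simp
  rw [h11, map_add, hw, h, ← h11] at h3
  have h3' := (qS_int d hd (p + s) (r + t) 1 1).1 (by simpa using h3)
  obtain ⟨n1, hn1⟩ := h1'
  obtain ⟨n2, hn2⟩ := h2'
  obtain ⟨n3, hn3⟩ := h3'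
  have E2 : p ^ 2 - d * e ^ 2 - 1 = 4 * n2 := by
    apply mul_left_cancel₀ hd'
    subst hre; linear_combination hn2
  have E3 : p * s - e * t = 2 * (n3 - n2 - n1) := by
    apply mul_left_cancel₀ (mul_ne_zero two_ne_zero hd')
    subst hre; linear_combination hn3 - hn2 - hn1
  have E1 : t ^ 2 = 1 + d * s + 4 * (- (d * n1)) := by
    linear_combination -hn1 + (d : ℤ) * hs2
  have par : ∀ z : ℤ, z ^ 2 % 2 = z % 2 := fun z => by
    rcases Int.emod_two_eq_zero_or_one z with h | h <;> simp [pow_two, Int.mul_emod, h]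
  have hes : (e - s) % 2 = 0 ∧ (p - (1 + d * s)) % 2 = 0 := by
    have q1 := par t
    have q2 := par p
    have q3 := par e
    rcases Int.emod_two_eq_zero_or_one e with he0 | he0
    · obtain ⟨e', rfl⟩ : ∃ e', e = 2 * e' := ⟨e / 2, by omega⟩
      have E2' : p ^ 2 = 1 + 4 * (n2 + d * e' ^ 2) := by linear_combination E2
      have E3' : p * s = 2 * (n3 - n2 - n1 + e' * t) := by linear_combination E3
      rcases hs with rfl | rfl
      · constructor
        · omega
        · generalize (n2 + d * e' ^ 2) = z at E2'
          simp only [mul_zero]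
          omega
      · exfalso
        generalize (n2 + d * e' ^ 2) = z at E2'
        generalize e' * t = z' at E3'
        omega
    · obtain ⟨e', rfl⟩ : ∃ e', e = 2 * e' + 1 := ⟨e / 2, by omega⟩
      have E2' : p ^ 2 = 1 + d + 4 * (n2 + d * (e' ^ 2 + e')) := by linear_combination E2
      have E3' : p * s = t + 2 * (n3 - n2 - n1 + e' * t) := by linear_combination E3
      generalize (n2 + d * (e' ^ 2 + e')) = z at E2'
      generalize e' * t = z' at E3'
      generalize (d * n1 : ℤ) = z'' at E1
      rcases hs with rfl | rfl
      · exfalso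
        simp only [mul_zero] at *
        omega
      · simp only [mul_one] at *
        omega
  rw [hw]
  ext
  · simp only
    rw [ZMod.intCast_eq_intCast_iff_dvd_sub]
    push_cast
    omega
  · simp only
    rw [ZMod.intCast_eq_intCast_iff_dvd_sub]
    push_cast
    obtain ⟨c, hc⟩ : ∃ c, e - s = 2 * c := ⟨(e - s) / 2, by omega⟩
    exact ⟨-c, by rw [hre]; linear_combination (-d : ℤ) * hc⟩

lemma card_isom (d : ℕ) (hd : 0 < d) :
    Nat.card {φ : (ZMod 2 × ZMod (2 * d)) ≃+ (ZMod 2 × ZMod (2 * d)) //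
        ∀ x, qS d (φ x) = qS d x} =
    Nat.card {v : ZMod 2 × ZMod (2 * d) // qS d v = qS d (0, 1)} := by
  have : NeZero (2 * d) := ⟨by omega⟩
  have ex : ∀ v : ZMod 2 × ZMod (2 * d), ∃ s t : ℤ, (s = 0 ∨ s = 1) ∧
      v = ((s : ZMod 2), (t : ZMod (2*d))) := by
    intro v
    obtain ⟨a, b, rfl⟩ := exists_int d v
    refine ⟨a % 2, b, by omega, ?_⟩
    congr 1
    rw [ZMod.intCast_eq_intCast_iff_dvd_sub]
    push_cast
    omega
  refine Nat.card_congr (Equiv.ofBijective (fun φ => ⟨φ.1 (0, 1), φ.2 _⟩) ⟨?_, ?_⟩)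
  · rintro ⟨φ, hφ⟩ ⟨ψ, hψ⟩ h
    simp only [Subtype.mk.injEq] at h ⊢
    obtain ⟨s, t, hs, hv⟩ := ex (φ (0, 1))
    have h1 := (isom_det d hd φ.toAddMonoidHom hφ s t hs hv).2
    have h2 := (isom_det d hd ψ.toAddMonoidHom hψ s t hs (by rw [← hv]; exact h.symm)).2
    have h3 : φ (1, 0) = ψ (1, 0) := h1.trans h2.symm
    ext1 x
    obtain ⟨a, b, rfl⟩ := exists_int d x
    have : (((a : ZMod 2), (b : ZMod (2*d)))) = a • ((1, 0) : ZMod 2 × ZMod (2*d)) + b • (0, 1) := by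
      ext <;> simp
    rw [this, map_add, map_add, map_zsmul, map_zsmul, map_zsmul, map_zsmul, h, h3]
  · rintro ⟨v, hv⟩
    obtain ⟨s, t, hs, rfl⟩ := ex v
    have hs2 : s ^ 2 = s := by rcases hs with rfl | rfl <;> norm_num
    have h1' := (qS_int d hd s t 0 1).1 (by simpa using hv)
    have h1'' : (4 * d : ℤ) ∣ t ^ 2 - (1 + d * s) := by
      rw [← dvd_neg]
      have e : -(t ^ 2 - (1 + d * s)) = d * s ^ 2 - t ^ 2 - (d * 0 ^ 2 - 1 ^ 2) := by rw [hs2]; ring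
      rw [e]; exact h1'
    have hi := fS_isom d hd s t hs h1''
    have hb : Function.Bijective (fS d s t) :=
      Finite.injective_iff_bijective.1 (inj_of_isom d hd _ hi)
    refine ⟨⟨AddEquiv.ofBijective _ hb, hi⟩, ?_⟩
    simp only [Subtype.mk.injEq]
    have := fS_apply d s t 0 1
    simpa using this

/-- count of `t` mod `2d` with `t^2 = c` mod `4d` -/
def T (d : ℕ) (c : ℤ) : Type := {t : ZMod (2*d) // (4 * d : ℤ) ∣ (t.val : ℤ) ^ 2 - c}

lemma T_iff (d : ℕ) (hd : 0 < d) (c b : ℤ) :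
    (4 * d : ℤ) ∣ (((b : ZMod (2*d)).val : ℤ)) ^ 2 - c ↔ (4 * d : ℤ) ∣ b ^ 2 - c := by
  have : NeZero (2 * d) := ⟨by omega⟩
  have h2 : (((b : ZMod (2*d)).val : ℤ)) = b % (2 * d) := by
    rw [ZMod.val_intCast]; push_cast; rfl
  obtain ⟨v, hv⟩ : ∃ v : ℤ, (((b : ZMod (2*d)).val : ℤ)) = b + 2 * d * v :=
    ⟨-(b / (2 * d)), by rw [h2]; have := Int.emod_add_mul_ediv b (2*d); linarith⟩
  rw [hv]
  have : (b + 2 * d * v) ^ 2 - c = (b ^ 2 - c) + 4 * d * (b * v + d * v ^ 2) := by ring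
  rw [this]
  exact dvd_add_left (Dvd.intro _ rfl)

lemma card_split (d : ℕ) (hd : 0 < d) :
    Nat.card {v : ZMod 2 × ZMod (2 * d) // qS d v = qS d (0, 1)} =
      Nat.card (T d 1) + Nat.card (T d (1 + d)) := by
  have : NeZero (2 * d) := ⟨by omega⟩
  have key : ∀ (s : ℤ) (t : ZMod (2*d)), s ^ 2 = s → (qS d ((s : ZMod 2), t) = qS d (0, 1) ↔
      (4 * d : ℤ) ∣ (t.val : ℤ) ^ 2 - (1 + d * s)) := by
    intro s t hs2
    obtain ⟨b, rfl⟩ := ZMod.intCast_surjective t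
    rw [T_iff d hd]
    have := qS_int d hd s b 0 1
    simp only [Int.cast_zero, Int.cast_one] at this
    rw [this, ← dvd_neg, hs2]
    ring_nf
  have : Finite (T d 1) := by unfold T; infer_instance
  have : Finite (T d (1 + d)) := by unfold T; infer_instance
  rw [← Nat.card_sum]
  have k0 := fun t => key 0 t (by norm_num)
  have k1 := fun t => key 1 t (by norm_num)
  simp only [Int.cast_zero, Int.cast_one, mul_zero, mul_one, add_zero] at k0 k1
  refine (Nat.card_congr (Equiv.ofBijective (fun x : T d 1 ⊕ T d (1 + d) => Sum.elim (fun t => ⟨(0, t.1), (k0 _).2 t.2⟩)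
    (fun t => ⟨(1, t.1), (k1 _).2 t.2⟩) x) ⟨?_, ?_⟩)).symm
  · rintro (⟨x, hx⟩ | ⟨x, hx⟩) (⟨y, hy⟩ | ⟨y, hy⟩) h
    · have e : x = y := congrArg (fun z => z.1.2) h
      subst e; rfl
    · have e : (0 : ZMod 2) = 1 := congrArg (fun z => z.1.1) h
      exact absurd e (by decide)
    · have e : (1 : ZMod 2) = 0 := congrArg (fun z => z.1.1) h
      exact absurd e (by decide)
    · have e : x = y := congrArg (fun z => z.1.2) h
      subst e; rfl
  · rintro ⟨⟨s, t⟩, h⟩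
    have : s = 0 ∨ s = 1 := by
      have : ∀ s : ZMod 2, s = 0 ∨ s = 1 := by decide
      exact this s
    rcases this with rfl | rfl
    · exact ⟨Sum.inl ⟨t, (k0 _).1 h⟩, rfl⟩
    · exact ⟨Sum.inr ⟨t, (k1 _).1 h⟩, rfl⟩

lemma card_T_zero (d : ℕ) (hd : 0 < d) (h : ¬ (d % 4 = 3 ∨ 8 ∣ d)) :
    Nat.card (T d (1 + d)) = 0 := by
  have : IsEmpty (T d (1 + d)) := by
    refine ⟨fun x => ?_⟩
    have := cond_of_sq d hd _ x.2
    tauto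
  exact Nat.card_of_isEmpty

lemma card_T_one_add (d : ℕ) (hd : 0 < d) (h : d % 4 = 3 ∨ 8 ∣ d) :
    Nat.card (T d (1 + d)) = Nat.card (T d 1) := by
  symm
  rcases h with h | h
  · refine Nat.card_congr (Equiv.subtypeEquiv (Equiv.addRight (d : ZMod (2*d))) ?_)
    intro x
    obtain ⟨b, rfl⟩ := ZMod.intCast_surjective x
    have e : (Equiv.addRight (d : ZMod (2*d))) (b : ZMod (2*d)) = ((b + d : ℤ) : ZMod (2*d)) := by
      simp
    rw [e, T_iff d hd, T_iff d hd]
    have key : b % 2 = 1 → (4 * d : ℤ) ∣ ((b + d) ^ 2 - (1 + d)) - (b ^ 2 - 1) := by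
      intro hb
      obtain ⟨u, hu⟩ : ∃ u : ℤ, 2 * b + d - 1 = 4 * u := ⟨(2 * b + d - 1) / 4, by omega⟩
      exact ⟨u, by linear_combination (d : ℤ) * hu⟩
    constructor
    · intro hb
      have : b % 2 = 1 := by
        obtain ⟨n, hn⟩ := hb
        have q : b ^ 2 % 2 = b % 2 := by
          rcases Int.emod_two_eq_zero_or_one b with h | h <;> simp [pow_two, Int.mul_emod, h]
        have : b ^ 2 = 1 + 4 * (d * n) := by linarith
        generalize (d * n : ℤ) = z at this
        omega
      exact (dvd_iff_dvd_of_dvd_sub (key this)).2 hb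
    · intro hb
      have := cond_of_sq d hd _ hb
      exact (dvd_iff_dvd_of_dvd_sub (key (by omega))).1 hb
  · obtain ⟨m, hm⟩ := h
    obtain ⟨c, n, hc⟩ : ∃ c n : ℤ, c ^ 2 = 1 + d + 4 * d * n := by
      subst hm
      rcases Nat.even_or_odd' m with ⟨l, hl | hl⟩
      · exact ⟨1 + 4 * m, l, by rw [hl]; push_cast; ring⟩
      · exact ⟨1 - 4 * m, l, by rw [hl]; push_cast; ring⟩
    have hc2 : (c : ZMod (2*d)) * (c ^ 3 : ℤ) = 1 := by
      rw [← Int.cast_mul, ← Int.cast_one, ZMod.intCast_eq_intCast_iff_dvd_sub]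
      refine ⟨-(1 + 4 * m + 4 * n * (1 + d) + 8 * d * n ^ 2), ?_⟩
      have : c * c ^ 3 = (c ^ 2) ^ 2 := by ring
      rw [this, hc, hm]
      push_cast
      ring
    let u : (ZMod (2*d))ˣ := ⟨(c : ZMod (2*d)), ((c ^ 3 : ℤ) : ZMod (2*d)), hc2,
      (mul_comm _ _).trans hc2⟩
    refine Nat.card_congr (Equiv.subtypeEquiv (Units.mulLeft u) ?_)
    intro x
    obtain ⟨b, rfl⟩ := ZMod.intCast_surjective x
    have e : (Units.mulLeft u) (b : ZMod (2*d)) = ((c * b : ℤ) : ZMod (2*d)) := by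
      simp [u]
    rw [e, T_iff d hd, T_iff d hd]
    constructor
    · rintro ⟨z, hz⟩
      exact ⟨(1 + d) * z + n * b ^ 2, by linear_combination b ^ 2 * hc + (1 + d : ℤ) * hz⟩
    · rintro ⟨z, hz⟩
      have hm' : (d : ℤ) = 8 * m := by exact_mod_cast hm
      refine ⟨(1 - d) * (z - n * b ^ 2) + 2 * m * (b ^ 2 - 1), ?_⟩
      linear_combination (1 - d : ℤ) * hz - (1 - d : ℤ) * b ^ 2 * hc + d * (b^2-1) * hm'

lemma card_pm (n : ℕ) (hn : ((1 : ZMod n)) ≠ -1) :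
    Nat.card {u : ZMod n // u = 1 ∨ u = -1} = 2 := by
  have := Set.ncard_pair hn
  rw [← Nat.card_coe_set_eq] at this
  exact this

lemma pm_iff (p : ℕ) (hp : p.Prime) (hp2 : p ≠ 2) (k : ℕ) (v : ZMod (p ^ k)) :
    v ^ 2 = 1 ↔ (v = 1 ∨ v = -1) := by
  constructor
  · intro h
    obtain ⟨b, rfl⟩ := ZMod.intCast_surjective v
    have h' : (((b - 1) * (b + 1) : ℤ) : ZMod (p ^ k)) = 0 := by
      push_cast; linear_combination h
    rw [ZMod.intCast_zmod_eq_zero_iff_dvd] at h'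
    push_cast at h'
    have hP : Prime (p : ℤ) := Nat.prime_iff_prime_int.1 hp
    by_cases h1 : (p : ℤ) ∣ b - 1
    · have h2 : ¬ (p : ℤ) ∣ b + 1 := by
        intro h2
        have : (p : ℤ) ∣ 2 := by have := dvd_sub h2 h1; ring_nf at this; exact this
        have : p ∣ 2 := by exact_mod_cast this
        exact hp2 ((Nat.prime_dvd_prime_iff_eq hp Nat.prime_two).1 this)
      left
      have := hP.pow_dvd_of_dvd_mul_right k h2 h'
      have := (ZMod.intCast_zmod_eq_zero_iff_dvd (b - 1) (p ^ k)).2 (by exact_mod_cast this)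
      push_cast at this
      linear_combination this
    · right
      have := hP.pow_dvd_of_dvd_mul_left k h1 h'
      have := (ZMod.intCast_zmod_eq_zero_iff_dvd (b + 1) (p ^ k)).2 (by exact_mod_cast this)
      push_cast at this
      linear_combination this
  · rintro (rfl | rfl) <;> ring

lemma card_roots (m : ℕ) (hm : m ≠ 0) (hodd : ¬ 2 ∣ m) :
    Nat.card {v : ZMod m // v ^ 2 = 1} = 2 ^ m.primeFactors.card := by
  induction m using Nat.recOnPosPrimePosCoprime with
  | prime_pow p n hp hn =>
    have hp2 : p ≠ 2 := by
      rintro rfl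
      exact hodd (dvd_pow_self 2 hn.ne')
    simp only [pm_iff p hp hp2]
    rw [Nat.primeFactors_prime_pow hn.ne' hp, Finset.card_singleton, pow_one]
    apply card_pm
    intro h
    have h2 : ((2 : ℕ) : ZMod (p ^ n)) = 0 := by push_cast; linear_combination h
    rw [ZMod.natCast_eq_zero_iff] at h2
    have := (dvd_pow_self p hn.ne').trans h2
    exact hp2 ((Nat.prime_dvd_prime_iff_eq hp Nat.prime_two).1 this)
  | zero => exact absurd rfl hm
  | one =>
    simp only [Nat.primeFactors_one, Finset.card_empty, pow_zero]
    rw [Nat.card_eq_one_iff_unique]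
    exact ⟨⟨fun a b => Subtype.ext (Subsingleton.elim _ _)⟩, ⟨⟨1, by simp⟩⟩⟩
  | coprime a b ha hb hab iha ihb =>
    rw [hab.primeFactors_mul, Finset.card_union_of_disjoint hab.disjoint_primeFactors, pow_add,
      ← iha (by omega) (fun h => hodd (h.mul_right b)),
      ← ihb (by omega) (fun h => hodd (h.mul_left a)), ← Nat.card_prod]
    refine Nat.card_congr ((Equiv.subtypeEquiv (ZMod.chineseRemainder hab).toEquiv
      (q := fun x => x.1 ^ 2 = 1 ∧ x.2 ^ 2 = 1) ?_).trans (Equiv.subtypeProdEquivProd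
      (p := fun v : ZMod a => v ^ 2 = 1) (q := fun v : ZMod b => v ^ 2 = 1)))
    intro x
    rw [← (ZMod.chineseRemainder hab).injective.eq_iff]
    simp [Prod.ext_iff]

lemma two_iff (k : ℕ) (b : ℤ) : (2 ^ (k + 2) : ℤ) ∣ b ^ 2 - 1 ↔
    ((b : ZMod (2 ^ (k+1))) = 1 ∨ (b : ZMod (2 ^ (k+1))) = -1) := by
  have e1 : (b : ZMod (2 ^ (k+1))) = 1 ↔ (2 ^ (k+1) : ℤ) ∣ b - 1 := by
    rw [← sub_eq_zero, ← Int.cast_one, ← Int.cast_sub, ZMod.intCast_zmod_eq_zero_iff_dvd]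
    push_cast; rfl
  have e2 : (b : ZMod (2 ^ (k+1))) = -1 ↔ (2 ^ (k+1) : ℤ) ∣ b + 1 := by
    rw [eq_neg_iff_add_eq_zero, ← Int.cast_one, ← Int.cast_add, ZMod.intCast_zmod_eq_zero_iff_dvd]
    push_cast; rfl
  rw [e1, e2]
  constructor
  · intro h
    have hb : b % 2 = 1 := by
      obtain ⟨n, hn⟩ := h
      have q : b ^ 2 % 2 = b % 2 := by
        rcases Int.emod_two_eq_zero_or_one b with h | h <;> simp [pow_two, Int.mul_emod, h]
      have : b ^ 2 = 1 + 4 * (2 ^ k * n) := by rw [pow_add] at hn; linarith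
      generalize (2 ^ k * n : ℤ) = z at this
      omega
    obtain ⟨y, rfl⟩ : ∃ y, b = 2 * y + 1 := ⟨b / 2, by omega⟩
    have h' : (2 ^ k : ℤ) ∣ y * (y + 1) := by
      obtain ⟨n, hn⟩ := h
      exact ⟨n, by rw [pow_add] at hn; linarith⟩
    by_cases hy : (2 : ℤ) ∣ y
    · obtain ⟨n, hn⟩ := Int.prime_two.pow_dvd_of_dvd_mul_right k (by omega) h'
      left; exact ⟨n, by rw [hn]; ring⟩
    · obtain ⟨n, hn⟩ := Int.prime_two.pow_dvd_of_dvd_mul_left k hy h'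
      right; exact ⟨n, by rw [pow_succ]; linear_combination 2 * hn⟩
  · rintro (⟨n, hn⟩ | ⟨n, hn⟩)
    · refine ⟨n * (1 + 2 ^ k * n), ?_⟩
      have : b = 1 + 2 ^ (k+1) * n := by linarith
      rw [this]; ring
    · refine ⟨n * (2 ^ k * n - 1), ?_⟩
      have : b = 2 ^ (k+1) * n - 1 := by linarith
      rw [this]; ring

lemma card_T_one (d : ℕ) (hd : 0 < d) : Nat.card (T d 1) = 2 ^ d.primeFactors.card := by
  obtain ⟨k, m, hm, rfl⟩ := Nat.exists_eq_pow_mul_and_not_dvd hd.ne' 2 (by norm_num)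
  have hm0 : m ≠ 0 := by rintro rfl; simp at hm
  have hc2 : Nat.Coprime 2 m := (Nat.prime_two.coprime_iff_not_dvd).2 hm
  have hc : Nat.Coprime (2 ^ (k+1)) m := hc2.pow_left _
  have hN : 2 * (2 ^ k * m) = 2 ^ (k+1) * m := by ring
  let e : ZMod (2 * (2 ^ k * m)) ≃+* ZMod (2 ^ (k+1)) × ZMod m :=
    (ZMod.ringEquivCongr hN).trans (ZMod.chineseRemainder hc)
  have h1 : Nat.card (T (2 ^ k * m) 1) =
      Nat.card {u : ZMod (2 ^ (k+1)) // u = 1 ∨ u = -1} * Nat.card {v : ZMod m // v ^ 2 = 1} := by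
    rw [← Nat.card_prod]
    refine Nat.card_congr ((Equiv.subtypeEquiv e.toEquiv
      (q := fun x => (x.1 = 1 ∨ x.1 = -1) ∧ x.2 ^ 2 = 1) ?_).trans (Equiv.subtypeProdEquivProd
      (p := fun u : ZMod (2 ^ (k+1)) => u = 1 ∨ u = -1) (q := fun v : ZMod m => v ^ 2 = 1)))
    intro x
    obtain ⟨b, rfl⟩ := ZMod.intCast_surjective x
    rw [T_iff _ hd]
    have he : e.toEquiv (b : ZMod (2 * (2 ^ k * m))) = ((b : ZMod (2 ^ (k+1))), (b : ZMod m)) := by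
      change e (b : ZMod (2 * (2 ^ k * m))) = _
      rw [map_intCast]; rfl
    rw [he]
    simp only
    rw [← two_iff]
    have h3 : (b : ZMod m) ^ 2 = 1 ↔ (m : ℤ) ∣ b ^ 2 - 1 := by
      rw [← ZMod.intCast_zmod_eq_zero_iff_dvd]
      push_cast
      exact sub_eq_zero.symm
    rw [h3]
    have h4 : (4 * ((2 ^ k * m : ℕ) : ℤ)) = 2 ^ (k + 2) * m := by push_cast; ring
    rw [h4]
    have hic : IsCoprime (2 ^ (k+2) : ℤ) (m : ℤ) := by
      apply IsCoprime.pow_left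
      exact_mod_cast Nat.isCoprime_iff_coprime.2 hc2
    constructor
    · intro h
      exact ⟨(dvd_mul_right _ _).trans h, (dvd_mul_left _ _).trans h⟩
    · rintro ⟨ha, hb⟩
      exact hic.mul_dvd ha hb
  rw [h1, card_roots m hm0 hm]
  rcases Nat.eq_zero_or_pos k with rfl | hk
  · have : Nat.card {u : ZMod (2 ^ (0+1)) // u = 1 ∨ u = -1} = 1 := by
      rw [Nat.card_eq_fintype_card]; decide
    rw [this]; simp
  · rw [card_pm, (hc2.pow_left k).primeFactors_mul,
      Finset.card_union_of_disjoint (hc2.pow_left k).disjoint_primeFactors, pow_add,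
      Nat.primeFactors_prime_pow hk.ne' Nat.prime_two, Finset.card_singleton, pow_one]
    intro h
    have h2 : ((2 : ℕ) : ZMod (2 ^ (k+1))) = 0 := by push_cast; linear_combination h
    rw [ZMod.natCast_eq_zero_iff] at h2
    have := Nat.le_of_dvd (by norm_num) h2
    have : 2 ^ 2 ≤ 2 ^ (k+1) := Nat.pow_le_pow_right (by norm_num) (by omega)
    omega

/-- The orthogonal group of the discriminant form of `⟨2⟩ ⊕ ⟨-2d⟩` has order
`2^{1+ω(d)}` if `d ≡ 3 (mod 4)` or `8 ∣ d`, and order `2^{ω(d)}` otherwise. -/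
theorem card_orthogonal_group_discriminant_form_two_neg2d (d : ℕ) (hd : 0 < d) :
    Nat.card {φ : (ZMod 2 × ZMod (2 * d)) ≃+ (ZMod 2 × ZMod (2 * d)) //
        ∀ x, qS d (φ x) = qS d x} =
      if d % 4 = 3 ∨ 8 ∣ d then 2 ^ (1 + d.primeFactors.card)
      else 2 ^ d.primeFactors.card := by
  rw [card_isom d hd, card_split d hd]
  split_ifs with h
  · rw [card_T_one_add d hd h, card_T_one d hd, pow_add]; ring
  · rw [card_T_zero d hd h, card_T_one d hd, add_zero]
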